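/- Let p, q, a, b, c be positive integers and let s be a complex number with Re(s) > 1. Then S_{SO(6)}(p,q,a,b,c,s) = (1/2)(J₀ + J₂), where J₀ := 2(−1)^p Σ_{j=0}^{⌊p/2⌋} ζ(2j) Σ_{ω=0}^{p−2j} C(ω+a−1,ω) C(p+c−2j−ω−1,c−1) T(q+a+ω, s, p+b+c−2j−ω; 1, 1) + 2(−1)^{p+a} Σ_{j=0}^{⌊c/2⌋} ζ(2j) Σ_{ω=0}^{c−2j} C(ω+a−1,ω) C(p+c−2j−ω−1,p−1) T(q, s+a+ω, p+b+c−2j−ω; 1, 1) + 2(−1)^p Σ_{j=0}^{⌊a/2⌋} ζ(2j) Σ_{ω=0}^{p−1} C(ω+a−2j,ω) C(p+c−2−ω,c−1) T(q+a−2j+ω+1, s, p+b+c−1−ω; 1, 1) + 2(−1)^{p+a} Σ_{j=0}^{⌊a/2⌋} ζ(2j) Σ_{ω=0}^{c−1} C(ω+a−2j,ω) C(p+c−2−ω,p−1) T(q, s+a−2j+ω+1, p+b+c−1−ω; 1, 1), and J₂ is the same expression with every coefficient ζ(2j) replaced by φ(2j) and with the sign arguments of T in the four successive terms replaced by (1,−1),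 (−1,1), (−1,−1), (−1,−1) respectively; here C(n,k) denotes the binomial coefficient. -/

import Mathlib

open Complex Finset

/-- `φ(s) = (2^{1-s} - 1) ζ(s)` (with the convention `φ(1) = -log 2`). -/
noncomputable def phi (s : ℂ) : ℂ :=
  if s = 1 then -(Real.log 2 : ℂ) else ((2 : ℂ) ^ ((1 : ℂ) - s) - 1) * riemannZeta s

/-- `T(p,s,q;x,y) = Σ_{l ≠ 0, m ≥ 1, l+m ≠ 0} x^l y^m / (l^p m^s (l+m)^q)`. -/
noncomputable def T (p : ℕ) (s : ℂ) (q : ℕ) (x y : ℂ) : ℂ :=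
  ∑' lm : ℤ × ℕ,
    if lm.1 ≠ 0 ∧ lm.1 + ((lm.2 : ℤ) + 1) ≠ 0 then
      x ^ lm.1 * y ^ (lm.2 + 1) /
        ((lm.1 : ℂ) ^ p * (((lm.2 + 1 : ℕ) : ℂ)) ^ s *
          (((lm.1 + (lm.2 : ℤ) + 1 : ℤ) : ℂ)) ^ q)
    else 0

/-- Generic triple zeta-sum of type `A₃` with a weight `w` on `(l,m,n)`. -/
noncomputable def Z3 (w : ℕ → ℕ → ℕ → ℂ) (s₁ s₂ s₃ s₄ s₅ s₆ : ℂ) : ℂ :=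
  ∑' t : ℕ × ℕ × ℕ,
    w (t.1 + 1) (t.2.1 + 1) (t.2.2 + 1) /
      ((((t.1 + 1 : ℕ) : ℂ)) ^ s₁ * (((t.2.1 + 1 : ℕ) : ℂ)) ^ s₂ *
        (((t.2.2 + 1 : ℕ) : ℂ)) ^ s₃ * (((t.1 + 1 + (t.2.1 + 1) : ℕ) : ℂ)) ^ s₄ *
        (((t.2.1 + 1 + (t.2.2 + 1) : ℕ) : ℂ)) ^ s₅ *
        (((t.1 + 1 + (t.2.1 + 1) + (t.2.2 + 1) : ℕ) : ℂ)) ^ s₆)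

/-- `ζ₃(s₁,…,s₆;SO(6))`: the sum is restricted to `l ≡ n (mod 2)`. -/
noncomputable def ZSO6 : ℂ → ℂ → ℂ → ℂ → ℂ → ℂ → ℂ :=
  Z3 (fun l _ n => if l % 2 = n % 2 then 1 else 0)

/-- The twelve-term alternating combination `S` built from a six-variable zeta `Z`. -/
noncomputable def Scomb (Z : ℂ → ℂ → ℂ → ℂ → ℂ → ℂ → ℂ) (p q a b c : ℕ) (s : ℂ) : ℂ :=
  Z p q s a b c + (-1 : ℂ) ^ p * Z p a s q c b + (-1 : ℂ) ^ (p + a) * Z q a c p s b +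
    (-1 : ℂ) ^ (p + a + c) * Z q s c b a p + (-1 : ℂ) ^ q * Z a q b p s c +
    (-1 : ℂ) ^ (q + b) * Z a s b c q p + (-1 : ℂ) ^ (q + a) * Z a p b q c s +
    (-1 : ℂ) ^ (q + a + b) * Z a c b s p q + (-1 : ℂ) ^ (q + a + b + c) * Z s c p a b q +
    (-1 : ℂ) ^ (p + q + a) * Z q p c a b s + (-1 : ℂ) ^ (p + q + a + c) * Z q b c s p a +
    (-1 : ℂ) ^ (p + q + a + b + c) * Z s b p q c a

/-- The right-hand side `J₀` (from the functional relation for `ζ₃(·;A₃)`). -/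
noncomputable def J0 (p q a b c : ℕ) (s : ℂ) : ℂ :=
  2 * (-1 : ℂ) ^ p * ∑ j ∈ range (p / 2 + 1), riemannZeta (2 * j) *
      ∑ ω ∈ range (p - 2 * j + 1),
        (Nat.choose (ω + a - 1) ω : ℂ) * (Nat.choose (p + c - 2 * j - ω - 1) (c - 1) : ℂ) *
          T (q + a + ω) s (p + b + c - 2 * j - ω) 1 1 +
  2 * (-1 : ℂ) ^ (p + a) * ∑ j ∈ range (c / 2 + 1), riemannZeta (2 * j) *
      ∑ ω ∈ range (c - 2 * j + 1),
        (Nat.choose (ω + a - 1) ω : ℂ) * (Nat.choose (p + c - 2 * j - ω - 1) (p - 1) : ℂ) *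
          T q (s + a + ω) (p + b + c - 2 * j - ω) 1 1 +
  2 * (-1 : ℂ) ^ p * ∑ j ∈ range (a / 2 + 1), riemannZeta (2 * j) *
      ∑ ω ∈ range p,
        (Nat.choose (ω + a - 2 * j) ω : ℂ) * (Nat.choose (p + c - 2 - ω) (c - 1) : ℂ) *
          T (q + a - 2 * j + ω + 1) s (p + b + c - 1 - ω) 1 1 +
  2 * (-1 : ℂ) ^ (p + a) * ∑ j ∈ range (a / 2 + 1), riemannZeta (2 * j) *
      ∑ ω ∈ range c,
        (Nat.choose (ω + a - 2 * j) ω : ℂ) * (Nat.choose (p + c - 2 - ω) (p - 1) : ℂ) *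
          T q (s + ((a - 2 * j : ℕ) : ℂ) + ω + 1) (p + b + c - 1 - ω) 1 1

/-- The right-hand side `J₂` (from the functional relation for `ζ₃(·,λ₂∨;SU(4))`). -/
noncomputable def J2 (p q a b c : ℕ) (s : ℂ) : ℂ :=
  2 * (-1 : ℂ) ^ p * ∑ j ∈ range (p / 2 + 1), phi (2 * j) *
      ∑ ω ∈ range (p - 2 * j + 1),
        (Nat.choose (ω + a - 1) ω : ℂ) * (Nat.choose (p + c - 2 * j - ω - 1) (c - 1) : ℂ) *
          T (q + a + ω) s (p + b + c - 2 * j - ω) 1 (-1) +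
  2 * (-1 : ℂ) ^ (p + a) * ∑ j ∈ range (c / 2 + 1), phi (2 * j) *
      ∑ ω ∈ range (c - 2 * j + 1),
        (Nat.choose (ω + a - 1) ω : ℂ) * (Nat.choose (p + c - 2 * j - ω - 1) (p - 1) : ℂ) *
          T q (s + a + ω) (p + b + c - 2 * j - ω) (-1) 1 +
  2 * (-1 : ℂ) ^ p * ∑ j ∈ range (a / 2 + 1), phi (2 * j) *
      ∑ ω ∈ range p,
        (Nat.choose (ω + a - 2 * j) ω : ℂ) * (Nat.choose (p + c - 2 - ω) (c - 1) : ℂ) *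
          T (q + a - 2 * j + ω + 1) s (p + b + c - 1 - ω) (-1) (-1) +
  2 * (-1 : ℂ) ^ (p + a) * ∑ j ∈ range (a / 2 + 1), phi (2 * j) *
      ∑ ω ∈ range c,
        (Nat.choose (ω + a - 2 * j) ω : ℂ) * (Nat.choose (p + c - 2 - ω) (p - 1) : ℂ) *
          T q (s + ((a - 2 * j : ℕ) : ℂ) + ω + 1) (p + b + c - 1 - ω) (-1) (-1)

/-! Summed over all integers `l`, `m` and all `n ≥ 1` off the walls where one of the linear forms
`l`, `m`, `l + m`, `m + n`, `l + m + n` vanishes, the triple series splits along the twelve chambers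
of the root system `A₃` inside the half space `n > 0`. On each chamber the points `0`, `l`, `l + m`,
`l + m + n` occur in a fixed order, so that its part of the series is one signed term of `Scomb`.
The condition `l ≡ n (mod 2)` is imposed by averaging the character `x ^ (l + n)` over `x = ±1`.

For fixed `m`, `n` the sum over `l` is instead a sum of residues: decomposing into partial fractions
shows that it is obtained by multiplying, at each of the poles `0`, `-m`, `-(m + n)`, the Laurent
expansion of the summand by the generating series of the sums of `x ^ l / l ^ k` over `l ≠ 0`.
Those sums are given by `ζ` for `x = 1` and by `φ` for `x = -1`, which leads to `J0` and `J2`. -/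

local notation "δ[" i "]" => (Pi.single i 1 : _ → ℕ)

section Exponents

variable {ι : Type*} [DecidableEq ι]

@[elab_as_elim]
lemma exponent_induction [Finite ι] {P : (ι → ℕ) → Prop}
    (single : ∀ i n, n ≠ 0 → P (Pi.single i n))
    (add_single_add_single : ∀ k i j, i ≠ j → P (k + δ[i]) → P (k + δ[j]) →
      P (k + δ[i] + δ[j]))
    {k : ι → ℕ} (hk : k ≠ 0) : P k := by
  have := Fintype.ofFinite ι
  induction h : ∑ i, k i using Nat.strong_induction_on generalizing k with
  | _ n ih =>
  obtain ⟨i, hi⟩ := Function.ne_iff.mp hk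
  by_cases hsingle : ∃ j, j ≠ i ∧ k j ≠ 0
  · obtain ⟨j, hji, hj⟩ := hsingle
    obtain ⟨k', rfl⟩ : ∃ k', k = k' + δ[i] + δ[j] := by
      refine ⟨k - δ[i] - δ[j], funext fun t ↦ ?_⟩
      rcases eq_or_ne t i with rfl | hti
      · simpa [hji.symm] using (Nat.sub_add_cancel (Nat.one_le_iff_ne_zero.mpr hi)).symm
      · rcases eq_or_ne t j with rfl | htj
        · simpa [hji] using (Nat.sub_add_cancel (Nat.one_le_iff_ne_zero.mpr hj)).symm
        · simp [hti, htj]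
    have smaller (t : ι) : P (k' + δ[t]) :=
      ih _ (by simp [← h, sum_add_distrib]) (fun h0 ↦ by simpa using congrFun h0 t) rfl
    exact add_single_add_single k' i j hji.symm (smaller i) (smaller j)
  · have : k = Pi.single i (k i) := by
      ext j
      rcases eq_or_ne j i with rfl | hji
      · simp
      · simpa [hji] using fun h0 ↦ hsingle ⟨j, hji, h0⟩
    exact this ▸ single i (k i) hi

variable [Fintype ι] {M : Type*}

lemma prod_pow_single [CommMonoid M] (v : ι → M) (i : ι) (n : ℕ) :
    ∏ t, v t ^ (Pi.single i n : ι → ℕ) t = v i ^ n := by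
  rw [Fintype.prod_eq_single i fun t ht ↦ by simp [ht], Pi.single_eq_same]

lemma prod_pow_add_single [CommMonoid M] (v : ι → M) (k : ι → ℕ) (i : ι) :
    ∏ t, v t ^ (k + δ[i]) t = (∏ t, v t ^ k t) * v i := by
  simp only [Pi.add_apply, pow_add, prod_mul_distrib, prod_pow_single, pow_one]

lemma sub_mul_prod_inv_pow [Field M] (u : ι → M) (k : ι → ℕ) {i j : ι} (hi : u i ≠ 0)
    (hj : u j ≠ 0) :
    (u j - u i) * ∏ t, (u t)⁻¹ ^ (k + δ[i] + δ[j]) t =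
      ∏ t, (u t)⁻¹ ^ (k + δ[i]) t - ∏ t, (u t)⁻¹ ^ (k + δ[j]) t := by
  simp only [prod_pow_add_single]
  field_simp

end Exponents

section LaurentExpansion

open PowerSeries LaurentSeries

variable {K ι : Type*} [Field K] [Fintype ι]

/-- The Laurent expansion at `z` of the rational function `∏ j, (w - α j) ^ (-k j)` of `w`, the
series variable standing for `w - z`. -/
noncomputable def laurentExpansion (α : ι → K) (k : ι → ℕ) (z : K) : K⸨X⸩ :=
  ∏ j, (HahnSeries.single 1 1 + HahnSeries.C (z - α j))⁻¹ ^ k j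

lemma single_one_add_C_ne_zero (β : K) : (HahnSeries.single 1 1 + HahnSeries.C β : K⸨X⸩) ≠ 0 :=
  fun h ↦ by simpa [HahnSeries.C_apply] using congrArg (HahnSeries.coeff · 1) h

lemma coe_inv_X_add_C {β : K} (hβ : β ≠ 0) :
    (((X + C β : K⟦X⟧)⁻¹ : K⟦X⟧) : K⸨X⸩) = (HahnSeries.single 1 1 + HahnSeries.C β)⁻¹ := by
  refine eq_inv_of_mul_eq_one_left ?_
  rw [← coe_X, ← coe_C, ← PowerSeries.coe_add, ← PowerSeries.coe_mul,
    PowerSeries.inv_mul_cancel _ (by simpa), PowerSeries.coe_one]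

variable [DecidableEq ι]

lemma sub_mul_laurentExpansion (α : ι → K) (k : ι → ℕ) (z : K) (i j : ι) :
    HahnSeries.C (α i - α j) *
        laurentExpansion α (k + δ[i] + δ[j]) z =
      laurentExpansion α (k + δ[i]) z - laurentExpansion α (k + δ[j]) z := by
  rw [laurentExpansion, laurentExpansion, laurentExpansion,
    ← sub_mul_prod_inv_pow _ k (single_one_add_C_ne_zero _) (single_one_add_C_ne_zero _)]
  simp only [add_sub_add_left_eq_sub, ← map_sub, sub_sub_sub_cancel_left]

lemma sub_mul_coeff_mul_laurentExpansion (α : ι → K) (F : K⸨X⸩) (k : ι → ℕ) (z : K) (i j : ι)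
    (d : ℤ) :
    (α i - α j) * (F * laurentExpansion α (k + δ[i] + δ[j]) z).coeff d =
      (F * laurentExpansion α (k + δ[i]) z).coeff d -
        (F * laurentExpansion α (k + δ[j]) z).coeff d := by
  rw [← HahnSeries.coeff_sub, ← mul_sub, ← sub_mul_laurentExpansion, mul_left_comm,
    HahnSeries.C_mul_eq_smul, HahnSeries.coeff_smul, smul_eq_mul]

lemma laurentExpansion_eq_single_mul {α : ι → K} (hα : α.Injective) (k : ι → ℕ) (i : ι) :
    laurentExpansion α k (α i) = HahnSeries.single (-(k i : ℤ)) 1 *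
      ((∏ j ∈ univ.erase i, (X + C (α i - α j))⁻¹ ^ k j : K⟦X⟧) : K⸨X⸩) := by
  have principal : (HahnSeries.single 1 1 + HahnSeries.C (α i - α i))⁻¹ ^ k i =
      (HahnSeries.single (-(k i : ℤ)) 1 : K⸨X⸩) := by
    simp [HahnSeries.inv_single, HahnSeries.single_pow]
  rw [laurentExpansion, ← mul_prod_erase _ _ (mem_univ i), principal, map_prod]
  congr 1
  refine prod_congr rfl fun j hj ↦ ?_
  rw [PowerSeries.coe_pow, coe_inv_X_add_C (sub_ne_zero.mpr (hα.ne (ne_of_mem_erase hj).symm))]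

lemma coeff_coe_mul_laurentExpansion {α : ι → K} (hα : α.Injective) (k : ι → ℕ) (i : ι)
    (F : K⟦X⟧) {d : ℤ} {n : ℕ} (hd : d + k i = n) :
    ((F : K⸨X⸩) * laurentExpansion α k (α i)).coeff d =
      coeff n (F * ∏ j ∈ univ.erase i, (X + C (α i - α j))⁻¹ ^ k j) := by
  rw [laurentExpansion_eq_single_mul hα, mul_left_comm, ← PowerSeries.coe_mul,
    HahnSeries.coeff_single_mul, one_mul, sub_neg_eq_add, hd, coeff_coe_powerSeries]

omit [DecidableEq ι] in
theorem sum_residue_laurentExpansion {α : ι → K} (hα : α.Injective) {k : ι → ℕ} (hk : k ≠ 0) :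
    ∑ i, (laurentExpansion α k (α i)).coeff (-1) = if ∑ i, k i = 1 then 1 else 0 := by
  classical
  refine exponent_induction (fun i n _ ↦ ?_) (fun k i j hij hi hj ↦ ?_) hk
  · have regular (j : ι) (hj : j ≠ i) :
        (laurentExpansion α (Pi.single i n) (α j)).coeff (-1) = 0 := by
      rw [laurentExpansion_eq_single_mul hα, HahnSeries.coeff_single_mul, coeff_coe]
      simp [hj]
    rw [Fintype.sum_eq_single i regular, laurentExpansion, prod_pow_single]
    simp [HahnSeries.inv_single, HahnSeries.single_pow, HahnSeries.coeff_single, eq_comm]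
  · have recurrence (z : K) := sub_mul_coeff_mul_laurentExpansion α 1 k z i j (-1)
    simp only [one_mul] at recurrence
    refine (mul_right_inj' (sub_ne_zero.mpr (hα.ne hij))).mp ?_
    rw [mul_sum, sum_congr rfl fun t _ ↦ recurrence (α t), sum_sub_distrib, hi, hj]
    simp [sum_add_distrib]

end LaurentExpansion

section SymmetricSums

open PowerSeries LaurentSeries Filter Topology SummationFilter

lemma sum_Icc_sub_succ_sub_sum_Icc_sub {M : Type*} [AddCommGroup M] (f : ℤ → M) (N : ℕ) (α : ℤ) :
    ∑ l ∈ Icc (-(N : ℤ)) N, f (l - (α + 1)) - ∑ l ∈ Icc (-(N : ℤ)) N, f (l - α) =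
      f (-N - (α + 1)) - f (N - α) := by
  have translate : ∑ l ∈ Icc (-(N : ℤ)) N, f (l - (α + 1)) =
      ∑ l ∈ Icc (-(N : ℤ) - 1) (N - 1), f (l - α) :=
    sum_nbij' (· - 1) (· + 1) (by simp) (by simp) (by simp) (by simp)
      fun l _ ↦ by simp [sub_sub, add_comm]
  have endpoints := congrArg (fun s ↦ ∑ l ∈ s, f (l - α)) <|
    show insert (N : ℤ) (Icc (-(N : ℤ) - 1) (N - 1)) = insert (-N - 1 : ℤ) (Icc (-(N : ℤ)) N) by
      ext z; simp only [mem_insert, mem_Icc]; omega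
  rw [sum_insert (by simp), sum_insert (by simp)] at endpoints
  rw [translate, sub_eq_sub_iff_add_eq_add, add_comm, endpoints, sub_sub, add_comm 1]

theorem hasSum_symmetricIcc_comp_sub {M : Type*} [AddCommGroup M] [TopologicalSpace M]
    [IsTopologicalAddGroup M] {f : ℤ → M} {a : M} (hf : Tendsto f cofinite (𝓝 0))
    (h : HasSum f a (symmetricIcc ℤ)) (α : ℤ) :
    HasSum (fun l ↦ f (l - α)) a (symmetricIcc ℤ) := by
  rw [hasSum_symmetricIcc_iff] at h ⊢
  have endpoints (α : ℤ) : Tendsto (fun N : ℕ ↦ f (-N - (α + 1)) - f (N - α)) atTop (𝓝 0) := by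
    have left := hf.comp (show (fun N : ℕ ↦ -(N : ℤ) - (α + 1)).Injective from
      fun _ _ ↦ by simp).tendsto_cofinite
    have right := hf.comp (show (fun N : ℕ ↦ (N : ℤ) - α).Injective from
      fun _ _ ↦ by simp).tendsto_cofinite
    simpa [Nat.cofinite_eq_atTop] using left.sub right
  simp only [← sum_Icc_sub_succ_sub_sum_Icc_sub] at endpoints
  induction α using Int.induction_on with
  | zero => simpa using h
  | succ i ih => simpa using (endpoints i).add ih
  | pred i ih => simpa using ih.sub (endpoints (-i - 1))

/-- `F` is the generating series of the symmetric sums `∑ x ^ l / l ^ k` over `l ≠ 0`, with the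
constant coefficient `-1` that makes `hasSum_poleTerm` hold. -/
structure IsSymmSumSeries (x : ℂ) (F : ℂ⟦X⟧) : Prop where
  constantCoeff_eq : constantCoeff F = -1
  hasSum : ∀ k ≠ 0, HasSum (fun l : ℤ ↦ x ^ l / (l : ℂ) ^ k) (coeff k F) (symmetricIcc ℤ)

lemma tendsto_zpow_div_pow_cofinite {x : ℂ} (hx : ‖x‖ = 1) {k : ℕ} (hk : k ≠ 0) :
    Tendsto (fun l : ℤ ↦ x ^ l / (l : ℂ) ^ k) cofinite (𝓝 0) := by
  have := (tendsto_norm_cocompact_atTop (E := ℤ)).inv_tendsto_atTop.pow k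
  rw [cocompact_eq_cofinite, zero_pow hk] at this
  refine tendsto_zero_iff_norm_tendsto_zero.mpr (this.congr fun l ↦ ?_)
  simp [hx, Int.norm_eq_abs]

variable {ι : Type*} [Fintype ι] [DecidableEq ι] {x : ℂ} {F : ℂ⟦X⟧} {α : ι → ℤ}

/-- The summand `x ^ l * ∏ j, (l - α j) ^ (-k j)`, set to `0` at the poles, even at those where
`k j = 0`. -/
noncomputable def poleTerm (x : ℂ) (α : ι → ℤ) (k : ι → ℕ) (l : ℤ) : ℂ :=
  if ∃ j, α j = l then 0 else x ^ l * ∏ j, ((l : ℂ) - α j)⁻¹ ^ k j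

lemma sub_mul_poleTerm (x : ℂ) (α : ι → ℤ) (k : ι → ℕ) (i j : ι) (l : ℤ) :
    ((α i : ℂ) - α j) * poleTerm x α (k + δ[i] + δ[j]) l =
      poleTerm x α (k + δ[i]) l - poleTerm x α (k + δ[j]) l := by
  unfold poleTerm
  split_ifs with h
  · simp
  · push Not at h
    have hu (t : ι) : (l : ℂ) - α t ≠ 0 := sub_ne_zero.mpr (mod_cast (h t).symm)
    rw [← mul_sub, ← sub_mul_prod_inv_pow (fun t ↦ (l : ℂ) - α t) k (hu i) (hu j)]
    ring

lemma hasSum_poleTerm_single (hF : IsSymmSumSeries x F) (hx : ‖x‖ = 1)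
    (hα : α.Injective) (i : ι) {n : ℕ} (hn : n ≠ 0) :
    HasSum (poleTerm x α (Pi.single i n))
      (x ^ α i * coeff n F - ∑ j ∈ univ.erase i, x ^ α j * ((α j : ℂ) - α i)⁻¹ ^ n)
      (symmetricIcc ℤ) := by
  have hx0 : x ≠ 0 := norm_ne_zero_iff.mp (hx ▸ one_ne_zero)
  have full := (hasSum_symmetricIcc_comp_sub (tendsto_zpow_div_pow_cofinite hx hn) (hF.hasSum n hn)
    (α i)).mul_left (x ^ α i)
  have vanish (l : ℤ) (hl : l ∉ (univ.erase i).image α) :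
      (if ∃ j, α j = l then x ^ l * ((l : ℂ) - α i)⁻¹ ^ n else 0) = 0 := by
    refine ite_eq_right_iff.mpr ?_
    rintro ⟨j, rfl⟩
    obtain rfl : j = i := by simpa [hα.eq_iff] using hl
    simp [hn]
  have poles := hasSum_sum_of_ne_finset_zero (L := symmetricIcc ℤ) vanish
  simp only [sum_image hα.injOn, exists_apply_eq_apply, if_true] at poles
  refine (full.sub poles).congr_fun fun l ↦ ?_
  rw [poleTerm, prod_pow_single, mul_div_assoc', ← zpow_add₀ hx0, add_sub_cancel]
  split_ifs <;> simp [div_eq_mul_inv]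

omit [DecidableEq ι] in
theorem hasSum_poleTerm (hF : IsSymmSumSeries x F) (hx : ‖x‖ = 1) (hα : α.Injective)
    {k : ι → ℕ} (hk : k ≠ 0) :
    HasSum (poleTerm x α k)
      (∑ i, x ^ α i * ((F : ℂ⸨X⸩) * laurentExpansion (fun j ↦ (α j : ℂ)) k (α i)).coeff 0)
      (symmetricIcc ℤ) := by
  classical
  have hα' : (fun j ↦ (α j : ℂ)).Injective := Int.cast_injective.comp hα
  refine exponent_induction (fun i n hn ↦ ?_) (fun k i j hij hi hj ↦ ?_) hk
  · convert hasSum_poleTerm_single hF hx hα i hn using 1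
    have regular (j : ι) (hj : j ∈ univ.erase i) : ((F : ℂ⸨X⸩) *
        laurentExpansion (fun j ↦ (α j : ℂ)) (Pi.single i n) (α j)).coeff 0 =
          -((α j : ℂ) - α i)⁻¹ ^ n := by
      rw [coeff_coe_mul_laurentExpansion hα' (n := 0) _ j _ (by simp [ne_of_mem_erase hj])]
      rw [prod_eq_single_of_mem i (mem_erase.mpr ⟨(ne_of_mem_erase hj).symm, mem_univ i⟩)
        fun t _ hti ↦ by simp [hti]]
      simp [hF.constantCoeff_eq]
    rw [← add_sum_erase _ _ (mem_univ i), sub_eq_add_neg, ← sum_neg_distrib]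
    congr 1
    · rw [coeff_coe_mul_laurentExpansion hα' (n := n) _ i _ (by simp)]
      rw [prod_congr rfl fun j hj ↦ by rw [Pi.single_eq_of_ne (ne_of_mem_erase hj), pow_zero]]
      simp
    · exact sum_congr rfl fun j hj ↦ by rw [regular j hj, mul_neg]
  · have hij' : (α i : ℂ) - α j ≠ 0 := sub_ne_zero.mpr (hα'.ne hij)
    refine (hasSum_mul_left_iff hij').mp ?_
    simp_rw [mul_sum, mul_left_comm _ (x ^ (_ : ℤ)), sub_mul_poleTerm,
      sub_mul_coeff_mul_laurentExpansion (fun j ↦ (α j : ℂ)), mul_sub, sum_sub_distrib]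
    exact hi.sub hj

end SymmetricSums

section EvenSeries

open PowerSeries SummationFilter Topology

/-- The series `2 ∑ j, κ j X ^ (2 j)`: the symmetric sum of `x ^ l / l ^ k` over `l ≠ 0`, for
`x = ± 1`, vanishes when `k` is odd and doubles the sum over `l ≥ 1` when `k` is even. -/
noncomputable def evenSeries (κ : ℕ → ℂ) : ℂ⟦X⟧ :=
  mk fun k ↦ if Even k then 2 * κ (k / 2) else 0

lemma hasSum_symmetricIcc_of_odd {f : ℤ → ℂ} (hf : f.Odd) : HasSum f 0 (symmetricIcc ℤ) := by
  refine hasSum_symmetricIcc_iff.mpr (tendsto_const_nhds.congr fun N ↦ ?_)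
  exact (hf.finsetSum_eq_zero (ext fun l ↦ by simp; omega)).symm

lemma zpow_neg_eq_zpow_of_sq_eq_one {G : Type*} [DivisionMonoid G] {x : G} (hx : x ^ 2 = 1)
    (l : ℤ) : x ^ (-l) = x ^ l := by
  rw [zpow_neg, ← inv_zpow, inv_eq_of_mul_eq_one_left (by rw [← sq, hx])]

lemma isSymmSumSeries_evenSeries {x : ℂ} {κ : ℕ → ℂ} (hx : x ^ 2 = 1) (h0 : κ 0 = -1 / 2)
    (hκ : ∀ j ≠ 0, HasSum (fun n : ℕ ↦ x ^ (n + 1) / ((n + 1 : ℕ) : ℂ) ^ (2 * j)) (κ j)) :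
    IsSymmSumSeries x (evenSeries κ) where
  constantCoeff_eq := by norm_num [evenSeries, h0]
  hasSum k hk := by
    rw [evenSeries, coeff_mk]
    split_ifs with hparity
    · obtain ⟨j, rfl⟩ := even_iff_two_dvd.mp hparity
      have half := hκ j (by rintro rfl; simp at hk)
      rw [Nat.mul_div_cancel_left j two_pos]
      have two_sided : HasSum (fun l : ℤ ↦ x ^ l / (l : ℂ) ^ (2 * j)) (2 * κ j) := by
        simpa [hk, ← two_mul] using HasSum.of_add_one_of_neg_add_one
          (f := fun l : ℤ ↦ x ^ l / (l : ℂ) ^ (2 * j))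
          (half.congr_fun fun n ↦ by norm_cast)
          (half.congr_fun fun n ↦ by
            rw [zpow_neg_eq_zpow_of_sq_eq_one hx, Int.cast_neg, Even.neg_pow (by simp)]
            norm_cast)
      exact two_sided.mono_left (symmetricIcc ℤ).le_atTop
    · exact hasSum_symmetricIcc_of_odd fun l ↦ by
        rw [zpow_neg_eq_zpow_of_sq_eq_one hx, Int.cast_neg,
          Odd.neg_pow (Nat.not_even_iff_odd.mp hparity), div_neg]

lemma hasSum_one_pow_div_pow {j : ℕ} (hj : j ≠ 0) :
    HasSum (fun n : ℕ ↦ (1 : ℂ) ^ (n + 1) / ((n + 1 : ℕ) : ℂ) ^ (2 * j))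
      (riemannZeta (2 * j)) := by
  have summable : Summable fun n : ℕ ↦ 1 / (n : ℂ) ^ (2 * j) :=
    .of_norm (by simpa using Real.summable_one_div_nat_pow (p := 2 * j).mpr (by omega))
  have := (hasSum_nat_add_iff' 1).mpr summable.hasSum
  rw [← zeta_nat_eq_tsum_of_gt_one (k := 2 * j) (by omega)] at this
  simpa [hj] using this

lemma hasSum_neg_one_pow_mul_of_odd {f : ℕ → ℂ} {a b : ℂ} (h : HasSum f a)
    (hodd : HasSum (fun n ↦ f (2 * n + 1)) b) :
    HasSum (fun n ↦ (-1) ^ (n + 1) * f n) (2 * b - a) := by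
  have odd_part : HasSum (fun n ↦ if Odd n then f n else 0) b := by
    refine (Function.Injective.hasSum_iff (g := fun n : ℕ ↦ 2 * n + 1) (fun _ _ ↦ by simp)
      fun n hn ↦ if_neg fun ⟨m, hm⟩ ↦ hn ⟨m, hm.symm⟩).mp (hodd.congr_fun fun n ↦ ?_)
    simp
  refine ((odd_part.mul_left 2).sub h).congr_fun fun n ↦ ?_
  rcases Nat.even_or_odd n with hn | hn
  · simp [pow_succ, hn.neg_one_pow, Nat.not_odd_iff_even.mpr hn]
  · simp [pow_succ, hn.neg_one_pow, hn, two_mul]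

lemma phi_two_mul (j : ℕ) : phi (2 * j) = (2 * (2 ^ (2 * j))⁻¹ - 1) * riemannZeta (2 * j) := by
  have h1 : 2 * (j : ℂ) ≠ 1 := by norm_cast; omega
  rw [phi, if_neg h1, cpow_sub _ _ two_ne_zero, cpow_one, div_eq_mul_inv]
  norm_cast

lemma hasSum_neg_one_pow_div_pow {j : ℕ} (hj : j ≠ 0) :
    HasSum (fun n : ℕ ↦ (-1 : ℂ) ^ (n + 1) / ((n + 1 : ℕ) : ℂ) ^ (2 * j)) (phi (2 * j)) := by
  have all := hasSum_one_pow_div_pow hj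
  have odd := (all.mul_left ((2 ^ (2 * j))⁻¹)).congr_fun
    (g := fun n ↦ 1 ^ (2 * n + 1 + 1) / ((2 * n + 1 + 1 : ℕ) : ℂ) ^ (2 * j)) fun n ↦ by
      rw [show 2 * n + 1 + 1 = 2 * (n + 1) by ring, Nat.cast_mul, mul_pow]
      simp [mul_comm]
  convert! (hasSum_neg_one_pow_mul_of_odd all odd).congr_fun
    (g := fun n : ℕ ↦ (-1 : ℂ) ^ (n + 1) / ((n + 1 : ℕ) : ℂ) ^ (2 * j))
    (fun n ↦ by simp [div_eq_mul_inv]) using 1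
  rw [phi_two_mul]; ring

lemma isSymmSumSeries_zeta : IsSymmSumSeries 1 (evenSeries fun j ↦ riemannZeta (2 * j)) :=
  isSymmSumSeries_evenSeries (by simp) (by simp [riemannZeta_zero])
    fun _ ↦ hasSum_one_pow_div_pow

lemma isSymmSumSeries_phi : IsSymmSumSeries (-1) (evenSeries fun j ↦ phi (2 * j)) :=
  isSymmSumSeries_evenSeries (by simp) ((phi_two_mul 0).trans (by norm_num [riemannZeta_zero]))
    fun _ ↦ hasSum_neg_one_pow_div_pow

end EvenSeries

section Coefficients

open PowerSeries LaurentSeries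

lemma coeff_evenSeries_mul (κ : ℕ → ℂ) (G : ℂ⟦X⟧) (k : ℕ) :
    coeff k (evenSeries κ * G) = 2 * ∑ j ∈ range (k / 2 + 1), κ j * coeff (k - 2 * j) G := by
  rw [coeff_mul, Nat.sum_antidiagonal_eq_sum_range_succ_mk, mul_sum]
  simp only [evenSeries, coeff_mk, ite_mul, zero_mul]
  rw [← sum_filter]
  refine sum_nbij' (· / 2) (2 * ·) ?_ ?_ ?_ ?_ ?_
  all_goals simp only [mem_filter, mem_range, Nat.even_iff]
  · omega
  · omega
  · omega
  · omega
  · rintro i ⟨-, hi⟩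
    rw [Nat.two_mul_div_two_of_even (Nat.even_iff.mpr hi), mul_assoc]

variable {K : Type*} [Field K]

lemma coeff_inv_X_add_C_pow {β : K} (hβ : β ≠ 0) (d n : ℕ) :
    coeff n ((X + C β)⁻¹ ^ (d + 1)) = (-1) ^ n * ((d + n).choose d : K) / β ^ (d + 1 + n) := by
  have geometric : (X + C β : K⟦X⟧)⁻¹ = C β⁻¹ * rescale (-β⁻¹) (mk 1) := by
    have := congrArg (rescale (-β⁻¹)) (mk_one_mul_one_sub_eq_one K)
    rw [map_mul, map_sub, map_one, rescale_X] at this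
    rw [PowerSeries.inv_eq_iff_mul_eq_one (by simpa), ← this, mul_right_comm, mul_comm]
    congr 1
    rw [mul_add, ← map_mul, inv_mul_cancel₀ hβ, map_neg]
    simp [add_comm]
  rw [geometric, mul_pow, ← map_pow, ← map_pow, mk_one_pow_eq_mk_choose_add, coeff_C_mul,
    coeff_rescale, coeff_mk, neg_pow β⁻¹, pow_add β, inv_pow, inv_pow]
  field_simp

lemma coeff_inv_X_add_C_pow_mul {β γ : K} (hβ : β ≠ 0) (hγ : γ ≠ 0) {a c : ℕ} (ha : a ≠ 0)
    (hc : c ≠ 0) (n : ℕ) :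
    coeff n ((X + C β)⁻¹ ^ a * (X + C γ)⁻¹ ^ c) = (-1) ^ n * ∑ ω ∈ range (n + 1),
      ((ω + a - 1).choose ω : K) * ((n + c - ω - 1).choose (c - 1) : K) *
        (β ^ (a + ω) * γ ^ (n + c - ω))⁻¹ := by
  obtain ⟨a, rfl⟩ := Nat.exists_eq_succ_of_ne_zero ha
  obtain ⟨c, rfl⟩ := Nat.exists_eq_succ_of_ne_zero hc
  rw [coeff_mul, Nat.sum_antidiagonal_eq_sum_range_succ_mk, mul_sum]
  refine sum_congr rfl fun ω hω ↦ ?_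
  obtain ⟨r, rfl⟩ := Nat.exists_eq_add_of_le (Nat.lt_succ_iff.mp (mem_range.mp hω))
  simp only [Nat.succ_eq_add_one, coeff_inv_X_add_C_pow hβ, coeff_inv_X_add_C_pow hγ]
  rw [show ω + (a + 1) - 1 = a + ω by omega, show ω + r + (c + 1) - ω - 1 = c + r by omega,
    show ω + r + (c + 1) - ω = c + 1 + r by omega, Nat.add_sub_cancel_left, Nat.add_sub_cancel,
    ← Nat.choose_symm_add (a := a) (b := ω), pow_add (-1)]
  field_simp

lemma prod_erase_fin_three {M : Type*} [CommMonoid M] (f : Fin 3 → M) (i : Fin 3) :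
    ∏ j ∈ univ.erase i, f j = f (i + 1) * f (i + 2) := by
  rw [show univ.erase i = {i + 1, i + 2} by decide +revert, prod_pair (by decide +revert)]

lemma coeff_inv_X_add_C_pow_mul_of_ne {β γ : K} (hβ : β ≠ 0) (hγ : γ ≠ 0) (hβγ : β ≠ γ) {p c : ℕ}
    (hp : p ≠ 0) (hc : c ≠ 0) (n : ℕ) :
    coeff n ((X + C β)⁻¹ ^ p * (X + C γ)⁻¹ ^ c) =
      -coeff (p - 1) ((X + C (-β))⁻¹ ^ (n + 1) * (X + C (γ - β))⁻¹ ^ c) -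
        coeff (c - 1) ((X + C (-γ))⁻¹ ^ (n + 1) * (X + C (β - γ))⁻¹ ^ p) := by
  have hα : Function.Injective ![0, -β, -γ] := by
    intro i j h
    fin_cases i <;> fin_cases j <;> simp_all [eq_comm]
  have residues := sum_residue_laurentExpansion hα (k := ![n + 1, p, c]) fun h ↦ hp (congrFun h 1)
  have at_pole (i : Fin 3) {m : ℕ} (hm : m + 1 = ![n + 1, p, c] i) :=
    coeff_coe_mul_laurentExpansion hα ![n + 1, p, c] i 1 (d := -1) (n := m) (by omega)
  simp only [PowerSeries.coe_one, one_mul] at at_pole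
  rw [Fin.sum_univ_three, if_neg (by simp [Fin.sum_univ_three]; omega),
    at_pole 0 rfl, at_pole 1 (Nat.sub_add_cancel (Nat.one_le_iff_ne_zero.mpr hp)),
    at_pole 2 (Nat.sub_add_cancel (Nat.one_le_iff_ne_zero.mpr hc))] at residues
  simp only [prod_erase_fin_three, Fin.isValue, Fin.reduceAdd, Matrix.cons_val, sub_neg_eq_add,
    zero_add, sub_zero, neg_add_eq_sub] at residues
  rw [mul_comm ((X + C (-β))⁻¹ ^ (n + 1))]
  linear_combination residues

lemma coeff_inv_X_sub_C_pow_mul {β γ : K} (hβ : β ≠ 0) (hγ : γ ≠ 0) {a c : ℕ} (ha : a ≠ 0)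
    (hc : c ≠ 0) (n : ℕ) :
    coeff n ((X + C (-β))⁻¹ ^ a * (X + C (-γ))⁻¹ ^ c) = (-1) ^ (a + c) * ∑ ω ∈ range (n + 1),
      ((ω + a - 1).choose ω : K) * ((n + c - ω - 1).choose (c - 1) : K) *
        (β ^ (a + ω) * γ ^ (n + c - ω))⁻¹ := by
  rw [coeff_inv_X_add_C_pow_mul (neg_ne_zero.mpr hβ) (neg_ne_zero.mpr hγ) ha hc, mul_sum, mul_sum]
  refine sum_congr rfl fun ω hω ↦ ?_
  obtain ⟨r, rfl⟩ := Nat.exists_eq_add_of_le (Nat.lt_succ_iff.mp (mem_range.mp hω))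
  rw [show ω + r + c - ω = c + r by omega, neg_pow β, neg_pow γ, mul_mul_mul_comm, ← pow_add,
    mul_inv _ (β ^ _ * _), ← inv_pow (-1 : K), inv_neg_one,
    show a + ω + (c + r) = ω + r + (a + c) by ring, pow_add _ (ω + r)]
  have square : ((-1 : K) ^ (ω + r)) * (-1) ^ (ω + r) = 1 := by simp [← mul_pow]
  linear_combination (-1) ^ (a + c) * ((ω + a - 1).choose ω : K) *
    ((c + r - 1).choose (c - 1) : K) * (β ^ (a + ω) * γ ^ (c + r))⁻¹ * square

lemma coeff_inv_X_sub_C_pow_mul_inv_X_add_C_pow {m N : K} (hm : m ≠ 0) (hN : N ≠ 0)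
    (hmN : m + N ≠ 0) {p c : ℕ} (hp : p ≠ 0) (hc : c ≠ 0) (n : ℕ) :
    coeff n ((X + C (-m))⁻¹ ^ p * (X + C N)⁻¹ ^ c) =
      (-1) ^ p * ∑ ω ∈ range p, ((ω + n).choose ω : K) * ((p + c - 2 - ω).choose (c - 1) : K) *
        (m ^ (n + 1 + ω) * (m + N) ^ (p + c - 1 - ω))⁻¹ +
      (-1) ^ (p + n) * ∑ ω ∈ range c, ((ω + n).choose ω : K) *
        ((p + c - 2 - ω).choose (p - 1) : K) * (N ^ (n + 1 + ω) * (m + N) ^ (p + c - 1 - ω))⁻¹ := by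
  have hne : -m ≠ N := fun h ↦ hmN (by rw [← h, add_neg_cancel])
  rw [coeff_inv_X_add_C_pow_mul_of_ne (neg_ne_zero.mpr hm) hN hne hp hc, neg_neg, sub_neg_eq_add,
    add_comm N m, ← neg_add' m N, coeff_inv_X_add_C_pow_mul hm hmN n.succ_ne_zero hc,
    coeff_inv_X_sub_C_pow_mul hN hmN n.succ_ne_zero hp]
  obtain ⟨p, rfl⟩ := Nat.exists_eq_succ_of_ne_zero hp
  obtain ⟨c, rfl⟩ := Nat.exists_eq_succ_of_ne_zero hc
  have h (ω : ℕ) : p + 1 + (c + 1) - 2 - ω = p + c - ω ∧ p + 1 + (c + 1) - 1 - ω = p + c + 1 - ω ∧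
    p + c + 1 - ω - 1 = p + c - ω ∧ ω + (n + 1) - 1 = ω + n := by omega
  simp only [Nat.succ_eq_add_one, Nat.add_sub_cancel]
  simp only [show c + (p + 1) = p + c + 1 by ring, ← add_assoc p c 1, h]
  ring

end Coefficients

section Summability

lemma summable_mul_inv_abs_mul_inv_abs_add {β : Type*} {f : β → ℝ} (hf : Summable f)
    (hf0 : 0 ≤ f) (g : β → ℤ) :
    Summable fun z : β × ℤ ↦ f z.1 * (|(z.2 : ℝ)|⁻¹ * |(z.2 : ℝ) + g z.1|⁻¹) := by
  have squares : Summable fun l : ℤ ↦ (|(l : ℝ)|⁻¹) ^ 2 := by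
    simpa using Real.summable_one_div_int_pow.mpr one_lt_two
  have untranslated := hf.mul_of_nonneg squares hf0 fun _ ↦ sq_nonneg _
  have translated := (Equiv.prodShear (Equiv.refl β) fun b ↦ Equiv.addRight (g b)).summable_iff.mpr
    untranslated
  refine (untranslated.add translated).of_nonneg_of_le
    (fun z ↦ mul_nonneg (hf0 _) (by positivity)) fun z ↦ ?_
  simp only [Function.comp_apply, Equiv.prodShear_apply, Equiv.refl_apply, Equiv.coe_addRight,
    Int.cast_add, ← mul_add]
  refine mul_le_mul_of_nonneg_left ?_ (hf0 _)
  nlinarith [two_mul_le_add_sq |(z.2 : ℝ)|⁻¹ |(z.2 : ℝ) + g z.1|⁻¹,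
    show 0 ≤ |(z.2 : ℝ)|⁻¹ * |(z.2 : ℝ) + g z.1|⁻¹ by positivity]

lemma norm_intCast_inv_pow_le_one (n : ℤ) (p : ℕ) : ‖(n : ℂ)⁻¹ ^ p‖ ≤ 1 := by
  rw [norm_pow, norm_inv, norm_intCast]
  refine pow_le_one₀ (by positivity) ?_
  rw [← Int.cast_abs, Int.abs_eq_natAbs, Int.cast_natCast]
  exact Nat.cast_inv_le_one _

lemma norm_intCast_inv_pow_le (n : ℤ) {p : ℕ} (hp : p ≠ 0) :
    ‖(n : ℂ)⁻¹ ^ p‖ ≤ |(n : ℝ)|⁻¹ := by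
  obtain ⟨p, rfl⟩ := Nat.exists_eq_succ_of_ne_zero hp
  rw [pow_succ, norm_mul, norm_inv, norm_intCast]
  exact mul_le_of_le_one_left (by positivity) (norm_intCast_inv_pow_le_one n p)

end Summability

section RightHandSide

open PowerSeries LaurentSeries

/-- The summand of the series `T p s q x y`. -/
noncomputable def tornheimTerm (p : ℕ) (s : ℂ) (q : ℕ) (x y : ℂ) (t : ℤ × ℕ) : ℂ :=
  if t.1 ≠ 0 ∧ t.1 + ((t.2 : ℤ) + 1) ≠ 0 then
    x ^ t.1 * y ^ (t.2 + 1) /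
      ((t.1 : ℂ) ^ p * ((t.2 + 1 : ℕ) : ℂ) ^ s * ((t.1 + (t.2 : ℤ) + 1 : ℤ) : ℂ) ^ q)
  else 0

lemma tornheimTerm_mul (p : ℕ) (s : ℂ) (q : ℕ) (x y : ℂ) (t : ℤ × ℕ) (u v w : ℕ) :
    tornheimTerm p s q x y t * ((t.1 : ℂ) ^ u * ((t.2 + 1 : ℕ) : ℂ) ^ v *
      (t.1 + (t.2 + 1 : ℕ)) ^ w)⁻¹ = tornheimTerm (p + u) (s + v) (q + w) x y t := by
  unfold tornheimTerm
  split_ifs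
  · rw [cpow_add _ _ (Nat.cast_ne_zero.mpr t.2.succ_ne_zero), cpow_natCast]
    push_cast
    ring
  · rw [zero_mul]

lemma tornheimTerm_eq_mul (p : ℕ) (s : ℂ) (q : ℕ) (x y : ℂ) (t : ℤ × ℕ) :
    tornheimTerm p s q x y t = x ^ t.1 * y ^ (t.2 + 1) * tornheimTerm p s q 1 1 t := by
  unfold tornheimTerm
  split_ifs <;> simp
  ring

/-- The common shape of `J0` and `J2`, with an arbitrary function `𝒯` in place of `T`. -/
noncomputable def JSum (𝒯 : ℕ → ℂ → ℕ → ℂ → ℂ → ℂ) (κ : ℕ → ℂ) (x : ℂ) (p q a b c : ℕ)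
    (s : ℂ) : ℂ :=
  2 * (-1 : ℂ) ^ p * ∑ j ∈ range (p / 2 + 1), κ j *
      ∑ ω ∈ range (p - 2 * j + 1),
        (Nat.choose (ω + a - 1) ω : ℂ) * (Nat.choose (p + c - 2 * j - ω - 1) (c - 1) : ℂ) *
          𝒯 (q + a + ω) s (p + b + c - 2 * j - ω) 1 x +
  2 * (-1 : ℂ) ^ (p + a) * ∑ j ∈ range (c / 2 + 1), κ j *
      ∑ ω ∈ range (c - 2 * j + 1),
        (Nat.choose (ω + a - 1) ω : ℂ) * (Nat.choose (p + c - 2 * j - ω - 1) (p - 1) : ℂ) *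
          𝒯 q (s + a + ω) (p + b + c - 2 * j - ω) x 1 +
  2 * (-1 : ℂ) ^ p * ∑ j ∈ range (a / 2 + 1), κ j *
      ∑ ω ∈ range p,
        (Nat.choose (ω + a - 2 * j) ω : ℂ) * (Nat.choose (p + c - 2 - ω) (c - 1) : ℂ) *
          𝒯 (q + a - 2 * j + ω + 1) s (p + b + c - 1 - ω) x x +
  2 * (-1 : ℂ) ^ (p + a) * ∑ j ∈ range (a / 2 + 1), κ j *
      ∑ ω ∈ range c,
        (Nat.choose (ω + a - 2 * j) ω : ℂ) * (Nat.choose (p + c - 2 - ω) (p - 1) : ℂ) *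
          𝒯 q (s + ((a - 2 * j : ℕ) : ℂ) + ω + 1) (p + b + c - 1 - ω) x x

lemma J0_eq_JSum (p q a b c : ℕ) (s : ℂ) :
    J0 p q a b c s = JSum T (fun j ↦ riemannZeta (2 * j)) 1 p q a b c s := rfl

lemma J2_eq_JSum (p q a b c : ℕ) (s : ℂ) :
    J2 p q a b c s = JSum T (fun j ↦ phi (2 * j)) (-1) p q a b c s := rfl

/-- The poles `0`, `-m`, `-(m + n)` in `l` of the summand of the triple series. -/
def pole (t : ℤ × ℕ) : Fin 3 → ℤ :=
  ![0, -t.1, -(t.1 + t.2 + 1)]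

lemma pole_injective {t : ℤ × ℕ} (ht : t.1 ≠ 0 ∧ t.1 + ((t.2 : ℤ) + 1) ≠ 0) :
    (pole t).Injective := by
  intro i j
  fin_cases i <;> fin_cases j <;> simp [pole] <;> omega

lemma zpow_mul_zpow_eq_mul_zpow_pole_one {x : ℂ} (hx : x ^ 2 = 1) (t : ℤ × ℕ) :
    x ^ t.1 * x ^ (t.2 + 1) = x ^ (t.2 + 1) * x ^ pole t 1 := by
  rw [mul_comm, show pole t 1 = -t.1 from rfl, zpow_neg_eq_zpow_of_sq_eq_one hx]

lemma zpow_mul_one_pow_eq_mul_zpow_pole_two {x : ℂ} (hx : x ^ 2 = 1) (t : ℤ × ℕ) :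
    x ^ t.1 * 1 ^ (t.2 + 1) = x ^ (t.2 + 1) * x ^ pole t 2 := by
  have hx0 : x ≠ 0 := by rintro rfl; norm_num at hx
  rw [← zpow_natCast x, ← zpow_add₀ hx0, one_pow, mul_one, ← zpow_neg_eq_zpow_of_sq_eq_one hx]
  congr 1
  simp [pole]

lemma coeff_zero_evenSeries_mul_laurentExpansion {ι : Type*} [Fintype ι] [DecidableEq ι]
    {α : ι → ℤ} (hα : α.Injective) (κ : ℕ → ℂ) (k : ι → ℕ) (i : ι) :
    ((evenSeries κ : ℂ⸨X⸩) * laurentExpansion (fun j ↦ (α j : ℂ)) k (α i)).coeff 0 =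
      2 * ∑ j ∈ range (k i / 2 + 1), κ j *
        coeff (k i - 2 * j) (∏ t ∈ univ.erase i, (X + C ((α i : ℂ) - α t))⁻¹ ^ k t) := by
  have hα' : (fun j ↦ (α j : ℂ)).Injective := Int.cast_injective.comp hα
  rw [coeff_coe_mul_laurentExpansion hα' k i _ (zero_add _), coeff_evenSeries_mul]

lemma two_mul_le_of_mem_range {n j : ℕ} (hj : j ∈ range (n / 2 + 1)) : 2 * j ≤ n := by
  rw [mem_range] at hj
  omega

lemma two_mul_add_le_of_mem_range {n j ω : ℕ} (hj : j ∈ range (n / 2 + 1))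
    (hω : ω ∈ range (n - 2 * j + 1)) : 2 * j + ω ≤ n := by
  have := two_mul_le_of_mem_range hj
  rw [mem_range] at hω
  omega

lemma neg_one_pow_sub_two_mul {R : Type*} [Ring R] {n j : ℕ} (hj : 2 * j ≤ n) :
    (-1 : R) ^ (n - 2 * j) = (-1) ^ n := by
  obtain ⟨r, rfl⟩ := Nat.exists_eq_add_of_le hj
  simp [pow_add, pow_mul]

section Poles

variable (κ : ℕ → ℂ) {p a c : ℕ} (hp : p ≠ 0) (ha : a ≠ 0) (hc : c ≠ 0) {t : ℤ × ℕ}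
  (ht : t.1 ≠ 0 ∧ t.1 + ((t.2 : ℤ) + 1) ≠ 0)

include ha hc ht in
lemma coeff_at_pole_zero :
    ((evenSeries κ : ℂ⸨X⸩) *
        laurentExpansion (fun j ↦ (pole t j : ℂ)) ![p, a, c] (pole t 0)).coeff 0 =
      2 * ∑ j ∈ range (p / 2 + 1), κ j * ((-1) ^ p * ∑ ω ∈ range (p - 2 * j + 1),
        ((ω + a - 1).choose ω : ℂ) * ((p + c - 2 * j - ω - 1).choose (c - 1) : ℂ) *
          ((t.1 : ℂ) ^ (a + ω) * (t.1 + (t.2 + 1 : ℕ)) ^ (p + c - 2 * j - ω))⁻¹) := by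
  rw [coeff_zero_evenSeries_mul_laurentExpansion (pole_injective ht)]
  refine congrArg (2 * ·) (sum_congr rfl fun j hj ↦ ?_)
  have hj := two_mul_le_of_mem_range hj
  rw [prod_erase_fin_three, ← neg_one_pow_sub_two_mul hj, Nat.sub_add_comm hj,
    ← coeff_inv_X_add_C_pow_mul (Int.cast_ne_zero.mpr ht.1) (by exact_mod_cast ht.2) ha hc]
  simp [pole, add_assoc]

include hp ha ht in
lemma coeff_at_pole_two :
    ((evenSeries κ : ℂ⸨X⸩) *
        laurentExpansion (fun j ↦ (pole t j : ℂ)) ![p, a, c] (pole t 2)).coeff 0 =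
      2 * ∑ j ∈ range (c / 2 + 1), κ j * ((-1) ^ (p + a) * ∑ ω ∈ range (c - 2 * j + 1),
        ((ω + a - 1).choose ω : ℂ) * ((p + c - 2 * j - ω - 1).choose (p - 1) : ℂ) *
          (((t.2 + 1 : ℕ) : ℂ) ^ (a + ω) * (t.1 + (t.2 + 1 : ℕ)) ^ (p + c - 2 * j - ω))⁻¹) := by
  rw [coeff_zero_evenSeries_mul_laurentExpansion (pole_injective ht)]
  refine congrArg (2 * ·) (sum_congr rfl fun j hj ↦ ?_)
  have hj := two_mul_le_of_mem_range hj
  rw [prod_erase_fin_three, add_comm p, add_comm p, Nat.sub_add_comm hj, ← coeff_inv_X_sub_C_pow_mul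
    (Nat.cast_ne_zero.mpr t.2.succ_ne_zero) (by exact_mod_cast ht.2) ha hp,
    mul_comm (_ ^ _ : ℂ⟦X⟧)]
  simp [pole, add_assoc]

include hp hc ht in
lemma coeff_at_pole_one :
    ((evenSeries κ : ℂ⸨X⸩) *
        laurentExpansion (fun j ↦ (pole t j : ℂ)) ![p, a, c] (pole t 1)).coeff 0 =
      2 * ∑ j ∈ range (a / 2 + 1), κ j * ((-1) ^ p * ∑ ω ∈ range p,
        ((ω + a - 2 * j).choose ω : ℂ) * ((p + c - 2 - ω).choose (c - 1) : ℂ) *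
          ((t.1 : ℂ) ^ (a - 2 * j + 1 + ω) * (t.1 + (t.2 + 1 : ℕ)) ^ (p + c - 1 - ω))⁻¹) +
      2 * ∑ j ∈ range (a / 2 + 1), κ j * ((-1) ^ (p + a) * ∑ ω ∈ range c,
        ((ω + a - 2 * j).choose ω : ℂ) * ((p + c - 2 - ω).choose (p - 1) : ℂ) *
          (((t.2 + 1 : ℕ) : ℂ) ^ (a - 2 * j + 1 + ω) *
            (t.1 + (t.2 + 1 : ℕ)) ^ (p + c - 1 - ω))⁻¹) := by
  rw [coeff_zero_evenSeries_mul_laurentExpansion (pole_injective ht),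
    ← mul_add, ← sum_add_distrib]
  refine congrArg (2 * ·) (sum_congr rfl fun j hj ↦ ?_)
  have hj := two_mul_le_of_mem_range hj
  simp only [Nat.add_sub_assoc hj]
  rw [prod_erase_fin_three, ← mul_add, pow_add _ p a, ← neg_one_pow_sub_two_mul hj, ← pow_add,
    ← coeff_inv_X_sub_C_pow_mul_inv_X_add_C_pow (Int.cast_ne_zero.mpr ht.1)
      (Nat.cast_ne_zero.mpr t.2.succ_ne_zero) (by exact_mod_cast ht.2) hp hc,
    mul_comm (_ ^ _ : ℂ⟦X⟧)]
  simp [pole, add_assoc, -neg_add_rev]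

end Poles

lemma mul_sum_mul_sum_eq {R : Type*} [CommRing R] {J : ℕ} {L : ℕ → ℕ} {κ : ℕ → R}
    {C B D : ℕ → ℕ → R} {W ε : R}
    (h : ∀ j ∈ range J, ∀ ω ∈ range (L j), B j ω = W * D j ω) :
    2 * ε * ∑ j ∈ range J, κ j * ∑ ω ∈ range (L j), C j ω * B j ω =
      W * (2 * ∑ j ∈ range J, κ j * (ε * ∑ ω ∈ range (L j), C j ω * D j ω)) := by
  simp only [mul_sum]
  refine sum_congr rfl fun j hj ↦ sum_congr rfl fun ω hω ↦ ?_
  rw [h j hj ω hω]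
  ring

lemma JSum_tornheimTerm {x : ℂ} (hx : x ^ 2 = 1) (κ : ℕ → ℂ) {p a c : ℕ} (hp : p ≠ 0)
    (ha : a ≠ 0) (hc : c ≠ 0) (q b : ℕ) (s : ℂ) {t : ℤ × ℕ}
    (ht : t.1 ≠ 0 ∧ t.1 + ((t.2 : ℤ) + 1) ≠ 0) :
    JSum (fun p s q x y ↦ tornheimTerm p s q x y t) κ x p q a b c s =
      tornheimTerm q s b 1 x t * ∑ i, x ^ pole t i * ((evenSeries κ : ℂ⸨X⸩) *
        laurentExpansion (fun j ↦ (pole t j : ℂ)) ![p, a, c] (pole t i)).coeff 0 := by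
  have shift {q' b' : ℕ} {s' y z : ℂ} (i : Fin 3) (u v w : ℕ)
      (hsign : y ^ t.1 * z ^ (t.2 + 1) = x ^ (t.2 + 1) * x ^ pole t i)
      (hq : q' = q + u) (hs : s' = s + v) (hb : b' = b + w) :
      tornheimTerm q' s' b' y z t = x ^ (t.2 + 1) * x ^ pole t i * tornheimTerm q s b 1 1 t *
        ((t.1 : ℂ) ^ u * ((t.2 + 1 : ℕ) : ℂ) ^ v * (t.1 + (t.2 + 1 : ℕ)) ^ w)⁻¹ := by
    rw [hq, hs, hb, ← tornheimTerm_mul, tornheimTerm_eq_mul, hsign]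
  have sign_one := zpow_mul_zpow_eq_mul_zpow_pole_one hx t
  have sign_two := zpow_mul_one_pow_eq_mul_zpow_pole_two hx t
  rw [Fin.sum_univ_three, coeff_at_pole_zero κ ha hc ht, coeff_at_pole_one κ hp hc ht,
    coeff_at_pole_two κ hp ha ht, JSum]
  rw [mul_sum_mul_sum_eq fun j hj ω hω ↦ shift 0 (a + ω) 0 (p + c - 2 * j - ω)
      (by simp [pole]) (by ring) (by simp) (by have := two_mul_add_le_of_mem_range hj hω; omega),
    mul_sum_mul_sum_eq fun j hj ω hω ↦ shift 2 0 (a + ω) (p + c - 2 * j - ω)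
      sign_two (by ring) (by push_cast; ring) (by have := two_mul_add_le_of_mem_range hj hω; omega),
    mul_sum_mul_sum_eq fun j hj ω hω ↦ shift 1 (a - 2 * j + 1 + ω) 0 (p + c - 1 - ω)
      sign_one (by have := two_mul_le_of_mem_range hj; omega) (by simp)
      (by rw [mem_range] at hω; omega),
    mul_sum_mul_sum_eq fun j _ ω hω ↦ shift 1 0 (a - 2 * j + 1 + ω) (p + c - 1 - ω)
      sign_one (by ring) (by push_cast; ring) (by rw [mem_range] at hω; omega),
    tornheimTerm_eq_mul q s b 1 x t]
  simp only [pow_zero, one_mul, mul_one, one_zpow]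
  ring

end RightHandSide

section TripleSeries

open PowerSeries LaurentSeries SummationFilter

lemma norm_tornheimTerm_le {p q : ℕ} (hp : p ≠ 0) (hq : q ≠ 0) (s : ℂ) {x y : ℂ} (hx : ‖x‖ = 1)
    (hy : ‖y‖ = 1) (t : ℤ × ℕ) :
    ‖tornheimTerm p s q x y t‖ ≤ ((t.2 : ℝ) + 1) ^ (-s.re) *
      (|(t.1 : ℝ)|⁻¹ * |(t.1 : ℝ) + ((t.2 + 1 : ℤ) : ℝ)|⁻¹) := by
  unfold tornheimTerm
  split_ifs
  · have hN : ‖((t.2 + 1 : ℕ) : ℂ) ^ s‖⁻¹ = ((t.2 : ℝ) + 1) ^ (-s.re) := by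
      rw [norm_natCast_cpow_of_pos t.2.succ_pos, ← Real.rpow_neg (by positivity)]
      norm_cast
    rw [div_eq_mul_inv, norm_mul, norm_mul, norm_zpow, norm_pow, hx, hy, one_zpow, one_pow, one_mul,
      one_mul, mul_right_comm, norm_inv, norm_mul, mul_inv, hN, mul_comm, ← norm_inv, mul_inv,
      norm_mul, ← inv_pow, ← inv_pow, add_assoc, ← Int.cast_add]
    gcongr
    · exact norm_intCast_inv_pow_le _ hp
    · exact norm_intCast_inv_pow_le _ hq
  · rw [norm_zero]
    positivity

lemma summable_tornheimTerm {p q : ℕ} (hp : p ≠ 0) (hq : q ≠ 0) {s : ℂ} (hs : 1 < s.re) {x y : ℂ}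
    (hx : ‖x‖ = 1) (hy : ‖y‖ = 1) : Summable (tornheimTerm p s q x y) := by
  have zeta : Summable fun n : ℕ ↦ ((n : ℝ) + 1) ^ (-s.re) := by
    simpa using (summable_nat_add_iff 1).mpr (Real.summable_nat_rpow.mpr (neg_lt_neg hs))
  have majorant := summable_mul_inv_abs_mul_inv_abs_add zeta (fun n ↦ by positivity)
    fun n ↦ (n : ℤ) + 1
  exact .of_norm_bounded ((Equiv.prodComm ℤ ℕ).summable_iff.mpr majorant)
    (norm_tornheimTerm_le hp hq s hx hy)

lemma hasSum_JSum {s : ℂ} (hs : 1 < s.re) {x : ℂ} (hx : ‖x‖ = 1) (κ : ℕ → ℂ) {q b : ℕ}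
    (hq : q ≠ 0) (hb : b ≠ 0) (p a c : ℕ) :
    HasSum (fun t ↦ JSum (fun p s q x y ↦ tornheimTerm p s q x y t) κ x p q a b c s)
      (JSum T κ x p q a b c s) := by
  have term {p' q' : ℕ} {s' y z : ℂ} (hp' : p' ≠ 0) (hq' : q' ≠ 0) (hs' : s.re ≤ s'.re)
      (hy : ‖y‖ = 1) (hz : ‖z‖ = 1) : HasSum (tornheimTerm p' s' q' y z) (T p' s' q' y z) :=
    (summable_tornheimTerm hp' hq' (hs.trans_le hs') hy hz).hasSum
  have block {J : ℕ} {L : ℕ → ℕ} {C : ℕ → ℕ → ℂ} {f : ℕ → ℕ → ℤ × ℕ → ℂ} {S : ℕ → ℕ → ℂ} (ε : ℂ)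
      (h : ∀ j ∈ range J, ∀ ω ∈ range (L j), HasSum (f j ω) (S j ω)) :
      HasSum (fun t ↦ ε * ∑ j ∈ range J, κ j * ∑ ω ∈ range (L j), C j ω * f j ω t)
        (ε * ∑ j ∈ range J, κ j * ∑ ω ∈ range (L j), C j ω * S j ω) :=
    .mul_left _ <| hasSum_sum fun j hj ↦ .mul_left _ <| hasSum_sum fun ω hω ↦
      (h j hj ω hω).mul_left _
  have one := norm_one (α := ℂ)
  refine (((block _ fun j hj ω hω ↦ ?_).add (block _ fun j hj ω hω ↦ ?_)).add
    (block _ fun _ _ ω hω ↦ ?_)).add (block _ fun _ _ ω hω ↦ ?_)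
  · have := two_mul_add_le_of_mem_range hj hω
    exact term (by omega) (by omega) le_rfl one hx
  · have := two_mul_add_le_of_mem_range hj hω
    exact term hq (by omega) (by simpa [add_assoc] using by positivity) hx one
  · rw [mem_range] at hω
    exact term (by omega) (by omega) le_rfl hx hx
  · rw [mem_range] at hω
    exact term hq (by omega) (by simpa [add_assoc] using by positivity) hx hx

/-- The summand
`x ^ (l + n) / (l ^ p * m ^ q * n ^ s * (l + m) ^ a * (m + n) ^ b * (l + m + n) ^ c)`
at the triple `((m, n - 1), l)`, where `l` and `m` range over `ℤ` and `n` over the positive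
integers, set to `0` where one of the linear forms vanishes. -/
noncomputable def tripleTerm (x : ℂ) (p q a b c : ℕ) (s : ℂ) (u : (ℤ × ℕ) × ℤ) : ℂ :=
  tornheimTerm q s b 1 x u.1 * poleTerm x (pole u.1) ![p, a, c] u.2

lemma norm_poleTerm_pole_le {x : ℂ} (hx : ‖x‖ = 1) {p a : ℕ} (hp : p ≠ 0) (ha : a ≠ 0) (c : ℕ)
    (t : ℤ × ℕ) (l : ℤ) :
    ‖poleTerm x (pole t) ![p, a, c] l‖ ≤ |(l : ℝ)|⁻¹ * |(l : ℝ) + t.1|⁻¹ := by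
  unfold poleTerm
  split_ifs
  · rw [norm_zero]
    positivity
  · simp only [← Int.cast_sub, norm_mul, norm_zpow, hx, one_zpow, one_mul, Fin.prod_univ_three]
    refine (mul_le_of_le_one_right (by positivity) (norm_intCast_inv_pow_le_one _ _)).trans
      (mul_le_mul ?_ ?_ (norm_nonneg _) (by positivity))
    · simpa [pole] using norm_intCast_inv_pow_le l hp
    · simpa [pole] using norm_intCast_inv_pow_le (l + t.1) ha

variable {x : ℂ} {p q a b c : ℕ} {s : ℂ} (hp : p ≠ 0) (hq : q ≠ 0) (ha : a ≠ 0) (hb : b ≠ 0)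
  (hs : 1 < s.re)

include hp hq ha hb hs

lemma summable_tripleTerm (hx : ‖x‖ = 1) : Summable (tripleTerm x p q a b c s) := by
  refine .of_norm_bounded (summable_mul_inv_abs_mul_inv_abs_add
    (summable_tornheimTerm hq hb hs norm_one hx).norm (fun _ ↦ norm_nonneg _) Prod.fst) fun u ↦ ?_
  rw [tripleTerm, norm_mul]
  exact mul_le_mul_of_nonneg_left (norm_poleTerm_pole_le hx hp ha c _ _) (norm_nonneg _)

theorem tsum_tripleTerm (hc : c ≠ 0) (hx : x ^ 2 = 1) {κ : ℕ → ℂ}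
    (hκ : IsSymmSumSeries x (evenSeries κ)) :
    ∑' u, tripleTerm x p q a b c s u = JSum T κ x p q a b c s := by
  have hx1 : ‖x‖ = 1 := norm_eq_one_of_pow_eq_one hx two_ne_zero
  have summable := summable_tripleTerm (c := c) hp hq ha hb hs hx1
  have fibre (t : ℤ × ℕ) : ∑' l, tripleTerm x p q a b c s (t, l) =
      JSum (fun p s q x y ↦ tornheimTerm p s q x y t) κ x p q a b c s := by
    by_cases ht : t.1 ≠ 0 ∧ t.1 + ((t.2 : ℤ) + 1) ≠ 0
    · have symmetric := (hasSum_poleTerm hκ hx1 (pole_injective ht)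
        (k := ![p, a, c]) fun h ↦ hp (congrFun h 0)).mul_left (tornheimTerm q s b 1 x t)
      rw [JSum_tornheimTerm hx κ hp ha hc q b s ht]
      exact HasSum.unique
        ((summable.prod_factor t).hasSum.mono_left (symmetricIcc ℤ).le_atTop) symmetric
    · simp [tripleTerm, JSum, tornheimTerm, ht]
  rw [summable.tsum_prod, tsum_congr fibre, (hasSum_JSum hs hx1 κ hq hb p a c).tsum_eq]

end TripleSeries

section Chambers

open Equiv

lemma prod_lt_comp_perm {ι M : Type*} [Fintype ι] [LinearOrder ι] [CommMonoid M] (σ : Perm ι)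
    {g : ι → ι → M} (hg : ∀ i j, g i j = g j i) :
    ∏ ij : ι × ι with ij.1 < ij.2, g (σ ij.1) (σ ij.2) =
      ∏ ij : ι × ι with ij.1 < ij.2, g ij.1 ij.2 := by
  refine prod_nbij' (fun ij ↦ (min (σ ij.1) (σ ij.2), max (σ ij.1) (σ ij.2)))
    (fun ij ↦ (min (σ.symm ij.1) (σ.symm ij.2), max (σ.symm ij.1) (σ.symm ij.2))) ?_ ?_ ?_ ?_ ?_
  all_goals rintro ⟨i, j⟩ h
  all_goals replace h : i < j := by simpa using h
  · simpa using h.ne'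
  · simpa using h.ne'
  · rcases le_total (σ i) (σ j) with hσ | hσ <;> simp [hσ, h.le]
  · rcases le_total (σ.symm i) (σ.symm j) with hσ | hσ <;> simp [hσ, h.le]
  · rcases le_total (σ i) (σ j) with hσ | hσ <;> simp [hσ, hg (σ i)]

lemma neg_ofReal_cpow {r : ℝ} (hr : 0 < r) (s : ℂ) :
    (-r : ℂ) ^ s = (-1) ^ s * (r : ℂ) ^ s := by
  have hr0 : (r : ℂ) ≠ 0 := ofReal_ne_zero.mpr hr.ne'
  rw [← mul_neg_one, cpow_def_of_ne_zero (by simpa using hr0), log_ofReal_mul hr (by simp),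
    ofReal_log hr.le, add_mul, exp_add, ← cpow_def_of_ne_zero hr0,
    ← cpow_def_of_ne_zero (by simp), mul_comm]

section RootProd

variable {ι : Type*} [Fintype ι] [LinearOrder ι]

/-- The product of the linear forms `y j - y i`, `i < j` (the positive roots of type `A`), raised to
the powers `E i j`. -/
noncomputable def rootProd (E : ι → ι → ℂ) (y : ι → ℤ) : ℂ :=
  ∏ ij : ι × ι with ij.1 < ij.2, ((y ij.2 - y ij.1 : ℤ) : ℂ) ^ E ij.1 ij.2

/-- The sign (for integral exponents `E`) of `rootProd E` on the chamber of all `y` such that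
`y ∘ σ` is increasing. -/
noncomputable def chamberSign (E : ι → ι → ℂ) (σ : Perm ι) : ℂ :=
  ∏ ij : ι × ι with ij.1 < ij.2, if σ.symm ij.2 < σ.symm ij.1 then (-1) ^ E ij.1 ij.2 else 1

lemma rootProd_sub_const (E : ι → ι → ℂ) (y : ι → ℤ) (d : ℤ) :
    rootProd E (fun i ↦ y i - d) = rootProd E y := by
  simp only [rootProd, sub_sub_sub_cancel_right]

lemma rootProd_eq_chamberSign_mul {E : ι → ι → ℂ} (hE : ∀ i j, E i j = E j i) {y : ι → ℤ}
    {σ : Perm ι} (hy : StrictMono (y ∘ σ)) :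
    rootProd E y = chamberSign E σ * rootProd (fun i j ↦ E (σ i) (σ j)) (y ∘ σ) := by
  have absolute := prod_lt_comp_perm σ (g := fun i j ↦ ((|y j - y i| : ℝ) : ℂ) ^ E i j)
    fun i j ↦ by rw [abs_sub_comm, hE]
  have sorted : rootProd (fun i j ↦ E (σ i) (σ j)) (y ∘ σ) =
      ∏ ij : ι × ι with ij.1 < ij.2, ((|y ij.2 - y ij.1| : ℝ) : ℂ) ^ E ij.1 ij.2 := by
    rw [← absolute]
    refine prod_congr rfl fun ij hij ↦ ?_
    have hlt : (y (σ ij.1) : ℝ) < y (σ ij.2) := mod_cast hy (mem_filter.mp hij).2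
    rw [abs_of_pos (sub_pos.mpr hlt)]
    push_cast
    rfl
  rw [sorted, rootProd, chamberSign, ← prod_mul_distrib]
  refine prod_congr rfl fun ij hij ↦ ?_
  have lt_iff : σ.symm ij.2 < σ.symm ij.1 ↔ y ij.2 < y ij.1 := by
    simpa using (hy.lt_iff_lt (a := σ.symm ij.2) (b := σ.symm ij.1)).symm
  have hne : y ij.1 ≠ y ij.2 := by
    simpa using hy.injective.ne (σ.symm.injective.ne (mem_filter.mp hij).2.ne)
  rcases hne.lt_or_gt with h | h
  · have hlt : (y ij.1 : ℝ) < y ij.2 := mod_cast h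
    rw [if_neg (lt_iff.not.mpr h.not_gt), one_mul, abs_of_pos (sub_pos.mpr hlt)]
    push_cast
    rfl
  · have hlt : (y ij.2 : ℝ) < y ij.1 := mod_cast h
    rw [if_pos (lt_iff.mpr h), abs_of_neg (sub_neg.mpr hlt), ← neg_ofReal_cpow (by linarith)]
    push_cast
    rw [neg_neg]

end RootProd

end Chambers

section ChamberDecomposition

open Equiv

/-- The points `0`, `l`, `l + m`, `l + m + n` on the line, for the triple `((m, n - 1), l)`. -/
def points (u : (ℤ × ℕ) × ℤ) : Fin 4 → ℤ :=
  ![0, u.2, u.2 + u.1.1, u.2 + u.1.1 + u.1.2 + 1]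

/-- The triple `((m, n - 1), l)` of gaps between successive entries of `z`, where `z 2 < z 3`. -/
def gaps (z : Fin 4 → ℤ) : (ℤ × ℕ) × ℤ :=
  ((z 2 - z 1, (z 3 - z 2 - 1).toNat), z 1 - z 0)

lemma points_gaps {z : Fin 4 → ℤ} (hz : z 2 < z 3) : points (gaps z) = fun i ↦ z i - z 0 := by
  ext i
  fin_cases i <;> simp [points, gaps]
  omega

lemma gaps_points_add_const (u : (ℤ × ℕ) × ℤ) (d : ℤ) : gaps (fun i ↦ points u i + d) = u := by
  ext <;> simp [points, gaps]
  omega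

lemma points_two_lt_points_three (u : (ℤ × ℕ) × ℤ) : points u 2 < points u 3 := by
  simp [points]

/-- The points `0`, `l`, `l + m`, `l + m + n` for positive `l`, `m`, `n`, each encoded by its
predecessor. -/
def positivePoints (t : ℕ × ℕ × ℕ) : Fin 4 → ℤ :=
  ![0, t.1 + 1, t.1 + 1 + (t.2.1 + 1), t.1 + 1 + (t.2.1 + 1) + (t.2.2 + 1)]

lemma strictMono_positivePoints (t : ℕ × ℕ × ℕ) : StrictMono (positivePoints t) := by
  rw [Fin.strictMono_iff_lt_succ]
  intro i
  fin_cases i <;> simp [positivePoints]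

lemma positivePoints_add_const_injective {t t' : ℕ × ℕ × ℕ} {d d' : ℤ}
    (h : ∀ i, positivePoints t i + d = positivePoints t' i + d') : t = t' := by
  have h0 := h 0
  have h1 := h 1
  have h2 := h 2
  have h3 := h 3
  simp [positivePoints] at h0 h1 h2 h3
  ext <;> omega

lemma exists_positivePoints_add_const {z : Fin 4 → ℤ} (hz : StrictMono z) :
    ∃ t, ∀ i, positivePoints t i + z 0 = z i := by
  have h01 : z 0 < z 1 := hz (by decide)
  have h12 : z 1 < z 2 := hz (by decide)
  have h23 : z 2 < z 3 := hz (by decide)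
  refine ⟨((z 1 - z 0 - 1).toNat, (z 2 - z 1 - 1).toNat, (z 3 - z 2 - 1).toNat), fun i ↦ ?_⟩
  fin_cases i <;> simp [positivePoints] <;> omega

/-- A permutation `σ` with `σ.symm 2 < σ.symm 3` stands for the chamber
`y (σ 0) < y (σ 1) < y (σ 2) < y (σ 3)` of the half space `y 2 < y 3`. -/
abbrev Chamber : Type := {σ : Perm (Fin 4) // σ.symm 2 < σ.symm 3}

namespace Chamber

/-- The triple whose points, up to translation, are `positivePoints` relabelled by the
permutation. -/
def triple (w : Chamber × (ℕ × ℕ × ℕ)) : (ℤ × ℕ) × ℤ :=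
  gaps (positivePoints w.2 ∘ w.1.1.symm)

lemma points_triple (w : Chamber × (ℕ × ℕ × ℕ)) : points (triple w) =
    fun i ↦ positivePoints w.2 (w.1.1.symm i) - positivePoints w.2 (w.1.1.symm 0) :=
  points_gaps (strictMono_positivePoints w.2 w.1.2)

lemma points_triple_apply (w : Chamber × (ℕ × ℕ × ℕ)) (i : Fin 4) :
    points (triple w) (w.1.1 i) =
      positivePoints w.2 i - positivePoints w.2 (w.1.1.symm 0) := by
  simp [points_triple]

lemma strictMono_points_triple (w : Chamber × (ℕ × ℕ × ℕ)) :
    StrictMono (points (triple w) ∘ w.1.1) := by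
  intro i j hij
  simpa [points_triple_apply] using strictMono_positivePoints w.2 hij

lemma injective_points_triple (w : Chamber × (ℕ × ℕ × ℕ)) :
    (points (triple w)).Injective :=
  (strictMono_points_triple w).injective.of_comp_right w.1.1.surjective

lemma triple_injective : triple.Injective := by
  rintro ⟨σ, t⟩ ⟨τ, t'⟩ h
  have hσ := strictMono_points_triple (σ, t)
  have hτ := strictMono_points_triple (τ, t')
  rw [← h] at hτ
  have same : σ = τ := by
    refine Subtype.ext (Equiv.ext fun i ↦ injective_points_triple (σ, t) ?_)
    exact congrFun (Tuple.unique_monotone hσ.monotone hτ.monotone) i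
  subst same
  congr 1
  refine positivePoints_add_const_injective (d := - positivePoints t (σ.1.symm 0))
    (d' := - positivePoints t' (σ.1.symm 0)) fun i ↦ ?_
  rw [← sub_eq_add_neg, ← sub_eq_add_neg, ← points_triple_apply (σ, t), h,
    ← points_triple_apply (σ, t')]

lemma mem_range_triple {u : (ℤ × ℕ) × ℤ} (hu : (points u).Injective) :
    u ∈ Set.range triple := by
  set σ := Tuple.sort (points u)
  have sorted : StrictMono (points u ∘ σ) :=
    (Tuple.monotone_sort _).strictMono_of_injective (hu.comp σ.injective)
  have hσ : σ.symm 2 < σ.symm 3 := by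
    simpa [← sorted.lt_iff_lt] using points_two_lt_points_three u
  obtain ⟨t, ht⟩ := exists_positivePoints_add_const sorted
  refine ⟨(⟨σ, hσ⟩, t), ?_⟩
  rw [triple, ← gaps_points_add_const u (- points u (σ 0))]
  congr 1
  ext i
  simpa [← sub_eq_add_neg, eq_sub_iff_add_eq] using ht (σ.symm i)

end Chamber

theorem tsum_eq_sum_chamber {F : (ℤ × ℕ) × ℤ → ℂ} (hF : Summable F)
    (walls : ∀ u, ¬ (points u).Injective → F u = 0) :
    ∑' u, F u = ∑ σ : Chamber, ∑' t, F (Chamber.triple (σ, t)) := by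
  have support : Function.support F ⊆ Set.range Chamber.triple := fun u hu ↦
    Chamber.mem_range_triple (not_imp_comm.mp (walls u) hu)
  have summable : Summable fun w ↦ F (Chamber.triple w) :=
    hF.comp_injective Chamber.triple_injective
  rw [← Chamber.triple_injective.tsum_eq support, summable.tsum_prod, tsum_fintype]

end ChamberDecomposition

section ChamberSums

open Equiv

lemma prod_lt_fin_four {M : Type*} [CommMonoid M] (f : Fin 4 × Fin 4 → M) :
    ∏ ij with ij.1 < ij.2, f ij =
      f (0, 1) * f (1, 2) * f (2, 3) * f (0, 2) * f (1, 3) * f (0, 3) := by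
  have pairs : (univ.filter fun ij : Fin 4 × Fin 4 ↦ ij.1 < ij.2) =
      {(0, 1), (1, 2), (2, 3), (0, 2), (1, 3), (0, 3)} := by decide
  rw [pairs]
  simp [mul_assoc]

/-- The exponents in the summand of the triple series of the differences of the points
`0`, `l`, `l + m`, `l + m + n`. -/
def exponents (p q a b c : ℕ) (s : ℂ) : Fin 4 → Fin 4 → ℂ :=
  ![![0, p, a, c], ![p, 0, q, b], ![a, q, 0, s], ![c, b, s, 0]]

lemma exponents_comm (p q a b c : ℕ) (s : ℂ) (i j : Fin 4) :
    exponents p q a b c s i j = exponents p q a b c s j i := by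
  fin_cases i <;> fin_cases j <;> rfl

lemma points_injective_iff (u : (ℤ × ℕ) × ℤ) : (points u).Injective ↔
    (u.1.1 ≠ 0 ∧ u.1.1 + ((u.1.2 : ℤ) + 1) ≠ 0) ∧ ¬ ∃ j, pole u.1 j = u.2 := by
  simp only [Function.Injective, Fin.forall_fin_succ, Fin.exists_fin_succ, points, pole]
  simp
  omega

lemma rootProd_exponents_points (p q a b c : ℕ) (s : ℂ) (u : (ℤ × ℕ) × ℤ) :
    rootProd (exponents p q a b c s) (points u) =
      (u.2 : ℂ) ^ p * (u.1.1 : ℂ) ^ q * ((u.1.2 + 1 : ℕ) : ℂ) ^ s * (u.2 + u.1.1 : ℂ) ^ a *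
        (u.1.1 + u.1.2 + 1 : ℂ) ^ b * (u.2 + u.1.1 + u.1.2 + 1 : ℂ) ^ c := by
  rw [rootProd, prod_lt_fin_four]
  simp [exponents, points, -mul_eq_mul_left_iff, -mul_eq_mul_right_iff]
  ring_nf

lemma tripleTerm_eq {x : ℂ} (hx : x ^ 2 = 1) (p q a b c : ℕ) (s : ℂ) {u : (ℤ × ℕ) × ℤ}
    (hu : (points u).Injective) : tripleTerm x p q a b c s u =
      x ^ (∑ i, points u i) * (rootProd (exponents p q a b c s) (points u))⁻¹ := by
  obtain ⟨regular, not_pole⟩ := (points_injective_iff u).mp hu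
  have hx0 : x ≠ 0 := by rintro rfl; norm_num at hx
  have weight : x ^ (∑ i, points u i) = x ^ u.2 * x ^ (u.1.2 + 1) := by
    have : ∑ i, points u i = u.2 + (u.1.2 + 1 : ℕ) + 2 * (u.2 + u.1.1) := by
      simp [points, Fin.sum_univ_four]
      ring
    rw [this, zpow_add₀ hx0, zpow_mul, zpow_ofNat, hx, one_zpow, mul_one, zpow_add₀ hx0,
      zpow_natCast]
  rw [weight, rootProd_exponents_points, tripleTerm, tornheimTerm, if_pos regular, poleTerm,
    if_neg not_pole, Fin.prod_univ_three]
  simp [pole]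
  ring

lemma tripleTerm_eq_zero (x : ℂ) (p q a b c : ℕ) (s : ℂ) {u : (ℤ × ℕ) × ℤ}
    (hu : ¬ (points u).Injective) : tripleTerm x p q a b c s u = 0 := by
  rw [points_injective_iff, not_and_or, not_not] at hu
  rcases hu with irregular | is_pole
  · rw [tripleTerm, tornheimTerm, if_neg irregular, zero_mul]
  · rw [tripleTerm, poleTerm, if_pos is_pole, mul_zero]

lemma tripleTerm_add_tripleTerm (p q a b c : ℕ) (s : ℂ) {u : (ℤ × ℕ) × ℤ}
    (hu : (points u).Injective) :
    1 / 2 * (tripleTerm 1 p q a b c s u + tripleTerm (-1) p q a b c s u) =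
      if Even (∑ i, points u i) then (rootProd (exponents p q a b c s) (points u))⁻¹ else 0 := by
  rw [tripleTerm_eq (one_pow 2) _ _ _ _ _ _ hu, tripleTerm_eq neg_one_sq _ _ _ _ _ _ hu, one_zpow]
  split_ifs with h
  · rw [h.neg_one_zpow]
    ring
  · rw [(Int.not_even_iff_odd.mp h).neg_one_zpow]
    ring

lemma even_sum_points_triple_iff (σ : Chamber) (t : ℕ × ℕ × ℕ) :
    Even (∑ i, points (Chamber.triple (σ, t)) i) ↔ (t.1 + 1) % 2 = (t.2.2 + 1) % 2 := by
  rw [← Equiv.sum_comp σ.1]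
  simp only [Chamber.points_triple_apply (σ, t), Fin.sum_univ_four]
  generalize positivePoints t (σ.1.symm 0) = d
  simp [positivePoints, Int.even_iff]
  omega

lemma rootProd_points_triple {E : Fin 4 → Fin 4 → ℂ} (hE : ∀ i j, E i j = E j i) (σ : Chamber)
    (t : ℕ × ℕ × ℕ) : rootProd E (points (Chamber.triple (σ, t))) =
      chamberSign E σ.1 * rootProd (fun i j ↦ E (σ.1 i) (σ.1 j)) (positivePoints t) := by
  have sorted : points (Chamber.triple (σ, t)) ∘ σ.1 =
      fun i ↦ positivePoints t i - positivePoints t (σ.1.symm 0) :=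
    funext (Chamber.points_triple_apply (σ, t))
  rw [rootProd_eq_chamberSign_mul hE (Chamber.strictMono_points_triple (σ, t)), sorted,
    rootProd_sub_const]

lemma tsum_even_positivePoints (E : Fin 4 → Fin 4 → ℂ) :
    (∑' t : ℕ × ℕ × ℕ, if (t.1 + 1) % 2 = (t.2.2 + 1) % 2 then
      (rootProd E (positivePoints t))⁻¹ else 0) =
      ZSO6 (E 0 1) (E 1 2) (E 2 3) (E 0 2) (E 1 3) (E 0 3) := by
  refine tsum_congr fun t ↦ ?_
  rw [rootProd, prod_lt_fin_four, ite_div, one_div, zero_div]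
  simp [positivePoints]
  ring_nf

/-- The one-line notations `σ 0, σ 1, σ 2, σ 3` of the twelve chambers `σ`, in the order of the
terms of `Scomb`. -/
def oneLine : Fin 12 → Fin 4 → Fin 4 :=
  ![![0, 1, 2, 3], ![1, 0, 2, 3], ![1, 2, 0, 3], ![1, 2, 3, 0], ![0, 2, 1, 3], ![0, 2, 3, 1],
    ![2, 0, 1, 3], ![2, 0, 3, 1], ![2, 3, 0, 1], ![2, 1, 0, 3], ![2, 1, 3, 0], ![2, 3, 1, 0]]

/-- The one-line notations of the inverses of the permutations in `oneLine`. -/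
def oneLineInv : Fin 12 → Fin 4 → Fin 4 :=
  ![![0, 1, 2, 3], ![1, 0, 2, 3], ![2, 0, 1, 3], ![3, 0, 1, 2], ![0, 2, 1, 3], ![0, 3, 1, 2],
    ![1, 2, 0, 3], ![1, 3, 0, 2], ![2, 3, 0, 1], ![2, 1, 0, 3], ![3, 1, 0, 2], ![3, 2, 0, 1]]

/-- The enumeration of the chambers by their one-line notations. -/
def chamber (k : Fin 12) : Chamber where
  val := ⟨oneLine k, oneLineInv k, by revert k; decide, by revert k; decide⟩
  property := by revert k; decide

set_option maxRecDepth 4000 in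
lemma chamber_bijective : chamber.Bijective := by decide

lemma sum_chamberSign_inv_mul_eq_Scomb (Z : ℂ → ℂ → ℂ → ℂ → ℂ → ℂ → ℂ) (p q a b c : ℕ) (s : ℂ) :
    let E := exponents p q a b c s
    ∑ σ : Chamber, (chamberSign E σ.1)⁻¹ * Z (E (σ.1 0) (σ.1 1)) (E (σ.1 1) (σ.1 2))
      (E (σ.1 2) (σ.1 3)) (E (σ.1 0) (σ.1 2)) (E (σ.1 1) (σ.1 3)) (E (σ.1 0) (σ.1 3)) =
      Scomb Z p q a b c s := by
  intro E
  rw [← chamber_bijective.sum_comp]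
  simp only [Fin.sum_univ_succ, Fin.sum_univ_zero, chamberSign, prod_lt_fin_four, chamber,
    Equiv.coe_fn_mk, Equiv.coe_fn_symm_mk]
  simp [oneLine, oneLineInv, E, exponents, Scomb, Fin.lt_def, ← inv_pow]
  ring

end ChamberSums

theorem Scomb_ZSO6_eq_tsum_tripleTerm {p q a b c : ℕ} (hp : p ≠ 0) (hq : q ≠ 0) (ha : a ≠ 0)
    (hb : b ≠ 0) {s : ℂ} (hs : 1 < s.re) : Scomb ZSO6 p q a b c s =
      1 / 2 * (∑' u, tripleTerm 1 p q a b c s u + ∑' u, tripleTerm (-1) p q a b c s u) := by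
  have summable₁ := summable_tripleTerm (c := c) hp hq ha hb hs norm_one
  have summable₂ := summable_tripleTerm (c := c) hp hq ha hb hs
    (norm_neg (1 : ℂ) ▸ norm_one)
  rw [← summable₁.tsum_add summable₂, ← tsum_mul_left,
    tsum_eq_sum_chamber ((summable₁.add summable₂).mul_left _) fun u hu ↦ by
      simp [tripleTerm_eq_zero _ _ _ _ _ _ _ hu],
    ← sum_chamberSign_inv_mul_eq_Scomb]
  refine sum_congr rfl fun σ _ ↦ ?_
  rw [← tsum_even_positivePoints (fun i j ↦ exponents p q a b c s (σ.1 i) (σ.1 j)), ← tsum_mul_left]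
  refine tsum_congr fun t ↦ ?_
  rw [tripleTerm_add_tripleTerm _ _ _ _ _ _
    (Chamber.injective_points_triple (σ, t)), rootProd_points_triple (exponents_comm p q a b c s)]
  simp only [even_sum_points_triple_iff, mul_ite, mul_zero, mul_inv]

/-- Functional relation for `ζ₃(·;SO(6))`
(Theorem 6.1 of Komori–Matsumoto–Tsumura). -/
theorem functional_relation_SO6 (p q a b c : ℕ) (hp : 0 < p) (hq : 0 < q) (ha : 0 < a)
    (hb : 0 < b) (hc : 0 < c) (s : ℂ) (hs : 1 < s.re) :
    Scomb ZSO6 p q a b c s = (1 / 2) * (J0 p q a b c s + J2 p q a b c s) := by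
  rw [Scomb_ZSO6_eq_tsum_tripleTerm hp.ne' hq.ne' ha.ne' hb.ne' hs, J0_eq_JSum, J2_eq_JSum,
    tsum_tripleTerm hp.ne' hq.ne' ha.ne' hb.ne' hs hc.ne' (one_pow 2) isSymmSumSeries_zeta,
    tsum_tripleTerm hp.ne' hq.ne' ha.ne' hb.ne' hs hc.ne' neg_one_sq isSymmSumSeries_phi]
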